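/- Let G=(V,E) be a finite directed graph with a weight function wt: E → Σ into a unital quantale Σ. For S ⊆ V, let d_S(u,v) = ⨆ ⊗(P) over all paths P: u⇝v whose intermediate nodes all lie in S, and for a ∈ Σ let a★ = ⨆_{n ≥ 0} aⁿ (where a⁰ = 1̄). Then for all u,v,x ∈ V and S ⊆ V: d_{S∪{x}}(u,v) = d_S(u,v) ⊕ (d_S(u,x) ⊗ (d_S(x,x))★ ⊗ d_S(x,v)). -/

import Mathlib

/-- `IsPathList E u v p`: the list `p` is the node sequence of a path from `u` to `v`
in the directed graph with edge relation `E`. Nodes may repeat; a single node `u`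
(i.e. `p = [u]`) is a path of length 0 from `u` to `u`. -/
def IsPathList {V : Type*} (E : V → V → Prop) (u v : V) (p : List V) : Prop :=
  p.head? = some u ∧ p.getLast? = some v ∧ p.Chain' E

/-- The intermediate nodes of a path with node sequence `x_1, …, x_k, y_k`:
the nodes `x_2, …, x_k`, i.e. all nodes except the first and the last. -/
def intermediates {V : Type*} (p : List V) : List V := p.dropLast.tail

/-- The weight `⊗(P)` of the path with node sequence `p`: the ordered product of the
weights of its edges; the empty product (length-0 path) is `1̄`. -/
def pathWeight {V Q : Type*} [Monoid Q] (wt : V → V → Q) (p : List V) : Q :=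
  ((p.zip p.tail).map fun e => wt e.1 e.2).prod

/-- `d_S(u,v)`: the join of the weights of all paths `u ⇝ v` whose intermediate nodes
all lie in `S`. -/
noncomputable def pathDistRes {V Q : Type*} [Monoid Q] [CompleteLattice Q]
    (E : V → V → Prop) (wt : V → V → Q) (S : Set V) (u v : V) : Q :=
  ⨆ p : {p : List V // IsPathList E u v p ∧ ∀ x ∈ intermediates p, x ∈ S},
    pathWeight wt p.val

/-- The closure `a★ = ⨆_{n ≥ 0} aⁿ` (with `a⁰ = 1̄`). -/
noncomputable def qstar {Q : Type*} [Monoid Q] [CompleteLattice Q] (a : Q) : Q :=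
  ⨆ n : ℕ, a ^ n

/-!
For a fixed target `v`, the map `u ↦ d_S(u, v)` is the least `f : V → Q` satisfying `1 ≤ f v`,
`wt u v ≤ f u` for every edge `u → v`, and `wt u w * f w ≤ f u` for every edge `u → w` with `w ∈ S`.
Hence the inequality `≤` only requires that the right-hand side satisfy these three conditions for
`S ∪ {x}`; the interesting one is a first step into `x`, absorbed by `1 ⊔ a * a★ ≤ a★` with
`a = d_S(x, x)`. The inequality `≥` holds because paths through `S ∪ {x}` may be concatenated
at `x`. The inequality `d_S(u, w) * d_S(w, v) ≤ d_S(u, v)` for `w ∈ S` behind this is again the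
leastness of `d_S(·, w)`, now tested against the residual `d_S(w, v) ⇨ₗ d_S(·, v)`.
-/

section Paths

variable {V Q : Type*} {E : V → V → Prop} {u v w : V} {p : List V}

theorem isPathList_iff_isChain :
    IsPathList E u v p ↔ p.head? = some u ∧ p.getLast? = some v ∧ p.IsChain E :=
  Iff.rfl

theorem isPathList_singleton_iff {a : V} : IsPathList E u v [a] ↔ a = u ∧ a = v := by
  simp [isPathList_iff_isChain]

theorem isPathList_cons_cons_iff {a b : V} {l : List V} :
    IsPathList E u v (a :: b :: l) ↔ a = u ∧ E a b ∧ IsPathList E b v (b :: l) := by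
  simp [isPathList_iff_isChain, and_left_comm]

theorem IsPathList.exists_eq_cons (hp : IsPathList E u v p) : ∃ l, p = u :: l :=
  List.head?_eq_some_iff.mp hp.1

theorem IsPathList.cons (hp : IsPathList E w v p) (huw : E u w) : IsPathList E u v (u :: p) := by
  obtain ⟨l, rfl⟩ := hp.exists_eq_cons
  exact isPathList_cons_cons_iff.mpr ⟨rfl, huw, hp⟩

theorem intermediates_cons_cons_cons (a b c : V) (l : List V) :
    intermediates (a :: b :: c :: l) = b :: intermediates (b :: c :: l) :=
  rfl

theorem IsPathList.forall_mem_intermediates_cons {S : Set V} (hp : IsPathList E w v p)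
    (hS : ∀ y ∈ intermediates p, y ∈ S) (hw : w ∈ S) : ∀ y ∈ intermediates (u :: p), y ∈ S := by
  obtain ⟨_ | ⟨c, l⟩, rfl⟩ := hp.exists_eq_cons
  · simp [intermediates]
  · rw [intermediates_cons_cons_cons]
    exact List.forall_mem_cons.mpr ⟨hw, hS⟩

variable [Monoid Q] (wt : V → V → Q)

theorem pathWeight_singleton (a : V) : pathWeight wt [a] = 1 :=
  rfl

theorem pathWeight_cons_cons (a b : V) (l : List V) :
    pathWeight wt (a :: b :: l) = wt a b * pathWeight wt (b :: l) := by
  simp [pathWeight]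

theorem IsPathList.pathWeight_cons (hp : IsPathList E w v p) (u : V) :
    pathWeight wt (u :: p) = wt u w * pathWeight wt p := by
  obtain ⟨l, rfl⟩ := hp.exists_eq_cons
  exact pathWeight_cons_cons wt u w l

theorem pathWeight_le_of_step [Preorder Q] [MulLeftMono Q] {S : Set V} {f : V → Q}
    (one_le : 1 ≤ f v) (edge_le : ∀ u, E u v → wt u v ≤ f u)
    (step_le : ∀ u w, E u w → w ∈ S → wt u w * f w ≤ f u)
    (hp : IsPathList E u v p) (hS : ∀ y ∈ intermediates p, y ∈ S) : pathWeight wt p ≤ f u := by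
  obtain ⟨l, rfl⟩ := hp.exists_eq_cons
  induction l generalizing u with
  | nil =>
    obtain ⟨-, rfl⟩ := isPathList_singleton_iff.mp hp
    exact one_le
  | cons b l ih =>
    obtain ⟨-, hub, hb⟩ := isPathList_cons_cons_iff.mp hp
    rw [pathWeight_cons_cons]
    cases l with
    | nil =>
      obtain ⟨-, rfl⟩ := isPathList_singleton_iff.mp hb
      rw [pathWeight_singleton, mul_one]
      exact edge_le u hub
    | cons c l =>
      rw [intermediates_cons_cons_cons, List.forall_mem_cons] at hS
      exact (mul_le_mul_right (ih hb hS.2) _).trans (step_le u b hub hS.1)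

end Paths

section Star

variable {Q : Type*} [Monoid Q] [CompleteLattice Q]

theorem one_le_qstar (a : Q) : 1 ≤ qstar a :=
  le_iSup_of_le 0 (pow_zero a).ge

theorem qstar_le_of_mul_le [MulRightMono Q] {a b : Q} (hone : 1 ≤ b) (hmul : b * a ≤ b) :
    qstar a ≤ b := by
  refine iSup_le fun n => ?_
  induction n with
  | zero => rwa [pow_zero]
  | succ n ih =>
    rw [pow_succ]
    exact (mul_le_mul_left ih a).trans hmul

theorem mul_qstar_le_qstar [IsQuantale Q] (a : Q) : a * qstar a ≤ qstar a := by
  rw [qstar, Quantale.mul_iSup_distrib]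
  exact iSup_le fun n => le_iSup_of_le (n + 1) (pow_succ' a n).ge

theorem sup_mul_qstar_mul_le [IsQuantale Q] (a b : Q) :
    b ⊔ a * qstar a * b ≤ qstar a * b :=
  calc b ⊔ a * qstar a * b = (1 ⊔ a * qstar a) * b := by rw [Quantale.sup_mul_distrib, one_mul]
    _ ≤ qstar a * b := mul_le_mul_left (sup_le (one_le_qstar a) (mul_qstar_le_qstar a)) b

end Star

section PathDist

variable {V Q : Type*} [Monoid Q] [CompleteLattice Q] {E : V → V → Prop} (wt : V → V → Q)
  {S T : Set V} {u v w x : V}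

theorem pathWeight_le_pathDistRes {p : List V} (hp : IsPathList E u v p)
    (hS : ∀ y ∈ intermediates p, y ∈ S) : pathWeight wt p ≤ pathDistRes E wt S u v :=
  le_iSup_of_le ⟨p, hp, hS⟩ le_rfl

theorem pathDistRes_mono (hST : S ⊆ T) (u v : V) :
    pathDistRes E wt S u v ≤ pathDistRes E wt T u v :=
  iSup_le fun p => pathWeight_le_pathDistRes wt p.2.1 fun y hy => hST (p.2.2 y hy)

theorem pathDistRes_le_of_step [MulLeftMono Q] {f : V → Q}
    (one_le : 1 ≤ f v) (edge_le : ∀ u, E u v → wt u v ≤ f u)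
    (step_le : ∀ u w, E u w → w ∈ S → wt u w * f w ≤ f u) (u : V) :
    pathDistRes E wt S u v ≤ f u :=
  iSup_le fun p => pathWeight_le_of_step wt one_le edge_le step_le p.2.1 p.2.2

theorem one_le_pathDistRes (u : V) : 1 ≤ pathDistRes E wt S u u :=
  pathWeight_le_pathDistRes wt (isPathList_singleton_iff.mpr ⟨rfl, rfl⟩) (by simp [intermediates])

theorem edge_le_pathDistRes (huv : E u v) : wt u v ≤ pathDistRes E wt S u v := by
  have hv : IsPathList E v v [v] := isPathList_singleton_iff.mpr ⟨rfl, rfl⟩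
  calc wt u v = pathWeight wt [u, v] := by
        rw [hv.pathWeight_cons, pathWeight_singleton, mul_one]
    _ ≤ pathDistRes E wt S u v :=
        pathWeight_le_pathDistRes wt (hv.cons huv) (by simp [intermediates])

variable [IsQuantale Q]

theorem edge_mul_pathDistRes_le (huw : E u w) (hw : w ∈ S) :
    wt u w * pathDistRes E wt S w v ≤ pathDistRes E wt S u v := by
  rw [pathDistRes, Quantale.mul_iSup_distrib]
  refine iSup_le fun ⟨p, hp, hS⟩ => ?_
  rw [← hp.pathWeight_cons]
  exact pathWeight_le_pathDistRes wt (hp.cons huw) (hp.forall_mem_intermediates_cons hS hw)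

open scoped Quantale in
theorem pathDistRes_mul_pathDistRes_le (hw : w ∈ S) (u v : V) :
    pathDistRes E wt S u w * pathDistRes E wt S w v ≤ pathDistRes E wt S u v := by
  let f (y : V) : Q := pathDistRes E wt S w v ⇨ₗ pathDistRes E wt S y v
  have le_f {a : Q} {y : V} :
      a ≤ f y ↔ a * pathDistRes E wt S w v ≤ pathDistRes E wt S y v :=
    Quantale.leftMulResiduation_le_iff_mul_le
  refine le_f.mp (pathDistRes_le_of_step wt ?one_le ?edge_le ?step_le u)
  case one_le => exact le_f.mpr (one_mul _).le
  case edge_le => exact fun y hyw => le_f.mpr (edge_mul_pathDistRes_le wt hyw hw)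
  case step_le =>
    intro y z hyz hz
    rw [le_f, mul_assoc]
    exact (mul_le_mul_right (le_f.mp le_rfl) _).trans (edge_mul_pathDistRes_le wt hyz hz)

theorem pathDistRes_union_singleton_le (u : V) :
    pathDistRes E wt (S ∪ {x}) u v ≤
      pathDistRes E wt S u v ⊔
        pathDistRes E wt S u x * qstar (pathDistRes E wt S x x) * pathDistRes E wt S x v := by
  let f (y : V) : Q := pathDistRes E wt S y v ⊔
    pathDistRes E wt S y x * qstar (pathDistRes E wt S x x) * pathDistRes E wt S x v
  refine pathDistRes_le_of_step (f := f) wt ?one_le ?edge_le ?step_le u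
  case one_le => exact le_sup_of_le_left (one_le_pathDistRes wt v)
  case edge_le => exact fun y hyv => le_sup_of_le_left (edge_le_pathDistRes wt hyv)
  case step_le =>
    rintro y w hyw (hw | rfl)
    · dsimp only [f]
      rw [Quantale.mul_sup_distrib, ← mul_assoc, ← mul_assoc]
      gcongr <;> exact edge_mul_pathDistRes_le wt hyw hw
    · apply le_sup_of_le_right
      rw [mul_assoc (pathDistRes E wt S y w)]
      exact mul_le_mul' (edge_le_pathDistRes wt hyw) (sup_mul_qstar_mul_le _ _)

theorem qstar_pathDistRes_le (hST : S ⊆ T) (hx : x ∈ T) :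
    qstar (pathDistRes E wt S x x) ≤ pathDistRes E wt T x x := by
  refine qstar_le_of_mul_le (one_le_pathDistRes wt x) ?_
  calc pathDistRes E wt T x x * pathDistRes E wt S x x
    _ ≤ pathDistRes E wt T x x * pathDistRes E wt T x x :=
        mul_le_mul_right (pathDistRes_mono wt hST x x) _
    _ ≤ pathDistRes E wt T x x := pathDistRes_mul_pathDistRes_le wt hx x x

theorem pathDistRes_mul_qstar_mul_le (hST : S ⊆ T) (hx : x ∈ T) (u v : V) :
    pathDistRes E wt S u x * qstar (pathDistRes E wt S x x) * pathDistRes E wt S x v ≤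
      pathDistRes E wt T u v := by
  calc pathDistRes E wt S u x * qstar (pathDistRes E wt S x x) * pathDistRes E wt S x v
    _ ≤ pathDistRes E wt T u x * pathDistRes E wt T x x * pathDistRes E wt T x v := by
        gcongr
        · exact pathDistRes_mono wt hST u x
        · exact qstar_pathDistRes_le wt hST hx
        · exact pathDistRes_mono wt hST x v
    _ ≤ pathDistRes E wt T u x * pathDistRes E wt T x v :=
        mul_le_mul_left (pathDistRes_mul_pathDistRes_le wt hx u x) _
    _ ≤ pathDistRes E wt T u v := pathDistRes_mul_pathDistRes_le wt hx u v

end PathDist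

theorem stmt6_general {V Q : Type*} [Monoid Q] [CompleteLattice Q] [IsQuantale Q]
    (E : V → V → Prop) (wt : V → V → Q) (u v x : V) (S : Set V) :
    pathDistRes E wt (S ∪ {x}) u v =
      pathDistRes E wt S u v ⊔
        (pathDistRes E wt S u x * qstar (pathDistRes E wt S x x) *
          pathDistRes E wt S x v) := by
  have hS : S ⊆ S ∪ {x} := Set.subset_union_left
  have hx : x ∈ S ∪ {x} := Set.mem_union_right S rfl
  exact le_antisymm (pathDistRes_union_singleton_le wt u)
    (sup_le (pathDistRes_mono wt hS u v) (pathDistRes_mul_qstar_mul_le wt hS hx u v))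

/-- in a unital quantale, for all `u, v, x ∈ V` and `S ⊆ V`:
`d_{S∪{x}}(u,v) = d_S(u,v) ⊕ (d_S(u,x) ⊗ (d_S(x,x))★ ⊗ d_S(x,v))`. -/
theorem stmt6 {V Q : Type*} [Finite V] [Monoid Q] [CompleteLattice Q] [IsQuantale Q]
    (E : V → V → Prop) (wt : V → V → Q) (u v x : V) (S : Set V) :
    pathDistRes E wt (S ∪ {x}) u v =
      pathDistRes E wt S u v ⊔
        (pathDistRes E wt S u x * qstar (pathDistRes E wt S x x) *
          pathDistRes E wt S x v) :=
  stmt6_general E wt u v x S
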